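/- arXiv:1211.3732 — 2 statements merged into one kernel-verified Lean document; each statement's English description precedes it below -/
import Mathlib

section
/- Let d ≥ 1 be an integer, δ ∈ (0,1), K₀ ≥ 0 and K > 0. Let H(u', u'', t, x), with u' ∈ ℝ^{d+1}, u'' a symmetric d×d matrix, (t,x) ∈ ℝ × ℝ^d, be real-valued, Lipschitz continuous in u'', and such that at every point of differentiability of H with respect to u'' the derivative, represented as a symmetric matrix a via w ↦ tr(a w), belongs to 𝕊_δ; suppose also |H(u',0,t,x)| ≤ K₀|u'| + H̄ for all u',t,x with a finite constant H̄ ≥ 0. Define H_K(u,t,x) = max( H(u,t,x), P₀(u'') − K ) and H̄_K := sup over (u',t,x) of ( |H_K(u',0,t,x)| − K₀|u'| ) (which is finite). Then there is a constant N depending only on d and δ such that at every point u'' where H_K(u',·,t,x) is differentiable, with derivative represented by a symmetric matrix a via w ↦ tr(a w), one has |H_K(u,t,x) − tr(a u'')| ≤ N(K₀+1)(H̄_K + K + |u'|). -/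
open scoped BigOperators NNReal

attribute [local instance] Matrix.frobeniusNormedAddCommGroup Matrix.frobeniusNormedSpace

noncomputable section

/-- `𝕊_θ`: symmetric `d×d` matrices with `θ|ξ|² ≤ ⟨aξ,ξ⟩ ≤ θ⁻¹|ξ|²`. -/
def Sdelta (d : ℕ) (θ : ℝ) : Set (Matrix (Fin d) (Fin d) ℝ) :=
  {a | a.IsHermitian ∧ ∀ ξ : Fin d → ℝ,
    θ * (∑ i, ξ i ^ 2) ≤ (∑ i, ∑ j, a i j * ξ j * ξ i) ∧
      (∑ i, ∑ j, a i j * ξ j * ξ i) ≤ θ⁻¹ * (∑ i, ξ i ^ 2)}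

/-- Frobenius norm of a matrix. -/
def frobNorm (d : ℕ) (M : Matrix (Fin d) (Fin d) ℝ) : ℝ :=
  Real.sqrt (∑ i, ∑ j, (M i j) ^ 2)

/-- Euclidean norm of a vector. -/
def eunorm {n : ℕ} (u : Fin n → ℝ) : ℝ :=
  Real.sqrt (∑ i, u i ^ 2)

/-- Pucci's operator `P₀(M) = 2δ⁻¹ Σ λ_k⁺(M) − (δ/2) Σ λ_k⁻(M)` (for Hermitian `M`;
junk value `0` otherwise). -/
def pucci (d : ℕ) (δ : ℝ) (M : Matrix (Fin d) (Fin d) ℝ) : ℝ :=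
  if h : M.IsHermitian then
    2 * δ⁻¹ * (∑ k, max (h.eigenvalues k) 0) - (δ / 2) * (∑ k, max (-(h.eigenvalues k)) 0)
  else 0

open MeasureTheory in
/-- A Lipschitz function whose derivatives in the direction `w` are all at most `c`
increases by at most `c` along `w` (Rademacher plus Fubini). -/
lemma lip_increment_le {E : Type*} [NormedAddCommGroup E] [NormedSpace ℝ E]
    [FiniteDimensional ℝ E] (f : E → ℝ) (C : ℝ≥0) (hf : LipschitzWith C f) (w : E) (c : ℝ)
    (h : ∀ (y : E) (f' : E →L[ℝ] ℝ), HasFDerivAt f f' y → f' w ≤ c) (x : E) :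
    f (x + w) - f x ≤ c := by
  let _ : MeasurableSpace E := borel E
  have : BorelSpace E := ⟨rfl⟩
  let μ : Measure E := Measure.addHaar
  have hd : ∀ᵐ y ∂μ, DifferentiableAt ℝ f y := hf.ae_differentiableAt
  have hmeas : MeasurableSet {y | DifferentiableAt ℝ f y} :=
    measurableSet_of_differentiableAt ℝ f
  have h1 : ∀ᵐ s : ℝ, ∀ᵐ y ∂μ, DifferentiableAt ℝ f (y + s • w) := by
    refine Filter.Eventually.of_forall fun s => ?_
    exact (measurePreserving_add_right μ (s • w)).quasiMeasurePreserving.ae hd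
  have hm2 : MeasurableSet {p : ℝ × E | DifferentiableAt ℝ f (p.2 + p.1 • w)} := by
    have : Measurable (fun p : ℝ × E => p.2 + p.1 • w) := by fun_prop
    exact this hmeas
  have h2 : ∀ᵐ y ∂μ, ∀ᵐ s : ℝ, DifferentiableAt ℝ f (y + s • w) :=
    (Measure.ae_ae_comm (μ := (volume : Measure ℝ)) (ν := μ)
      (p := fun s y => DifferentiableAt ℝ f (y + s • w)) hm2).1 h1
  have h3 : ∀ᵐ y ∂μ, f (y + w) - f y ≤ c := by
    filter_upwards [h2] with y hy
    let g : ℝ → ℝ := fun s => f (y + s • w)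
    have hline : LipschitzWith ‖w‖₊ (fun s : ℝ => y + s • w) := by
      refine LipschitzWith.of_dist_le_mul fun s t => ?_
      rw [dist_add_left, dist_eq_norm, ← sub_smul, norm_smul, Real.dist_eq, Real.norm_eq_abs,
        mul_comm]
      rfl
    have hg : LipschitzWith (C * ‖w‖₊) g := hf.comp hline
    have hac : AbsolutelyContinuousOnInterval g 0 1 :=
      (hg.lipschitzOnWith).absolutelyContinuousOnInterval
    have hint := hac.integral_deriv_eq_sub
    have hle : ∫ s in (0:ℝ)..1, deriv g s ≤ ∫ s in (0:ℝ)..1, c := by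
      refine intervalIntegral.integral_mono_ae zero_le_one hac.intervalIntegrable_deriv
        (by simp) ?_
      filter_upwards [hy] with s hs
      have hder : HasDerivAt g (fderiv ℝ f (y + s • w) w) s := by
        have hl : HasDerivAt (fun s : ℝ => y + s • w) w s := by
          simpa using ((hasDerivAt_id s).smul_const w).const_add y
        exact hs.hasFDerivAt.comp_hasDerivAt s hl
      rw [hder.deriv]
      exact h _ _ hs.hasFDerivAt
    rw [hint] at hle
    simpa [g] using hle
  have hcl : IsClosed {y | f (y + w) - f y ≤ c} := by
    have := hf.continuous
    exact isClosed_le (by fun_prop) continuous_const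
  have hdense := Measure.dense_of_ae h3
  have : x ∈ closure {y | f (y + w) - f y ≤ c} := hdense x
  rwa [hcl.closure_eq] at this

/-- The space of symmetric matrices. -/
def symSub (d : ℕ) : Submodule ℝ (Matrix (Fin d) (Fin d) ℝ) where
  carrier := {A | A.IsHermitian}
  add_mem' := fun ha hb => Matrix.IsHermitian.add ha hb
  zero_mem' := Matrix.isHermitian_zero
  smul_mem' := fun c A hA => by
    have hA' : A.IsHermitian := hA
    show (c • A).IsHermitian
    rw [Matrix.IsHermitian, Matrix.conjTranspose_smul, hA'.eq]; simp

lemma frobNorm_eq_norm (d : ℕ) (A : Matrix (Fin d) (Fin d) ℝ) : frobNorm d A = ‖A‖ := by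
  rw [Matrix.frobenius_norm_def, frobNorm, Real.sqrt_eq_rpow]
  simp

/-- Symmetrization. -/
def symProj (d : ℕ) : Matrix (Fin d) (Fin d) ℝ →ₗ[ℝ] symSub d where
  toFun A := ⟨(1/2 : ℝ) • (A + A.transpose), by
    show Matrix.IsHermitian _
    ext i j
    simp; ring⟩
  map_add' A B := by
    ext i j
    simp; ring
  map_smul' c A := by
    ext i j
    simp; ring

lemma symProj_coe (d : ℕ) (y : symSub d) : symProj d (y : Matrix (Fin d) (Fin d) ℝ) = y := by
  have hy : (y : Matrix (Fin d) (Fin d) ℝ).IsHermitian := y.2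
  have h2 : (y : Matrix (Fin d) (Fin d) ℝ).transpose = y := by
    simpa [Matrix.IsHermitian, Matrix.conjTranspose_eq_transpose_of_trivial] using hy
  ext i j
  simp only [symProj, LinearMap.coe_mk, AddHom.coe_mk, h2]
  simp; ring

lemma hermitian_smul {d : ℕ} {M : Matrix (Fin d) (Fin d) ℝ} (hM : M.IsHermitian) (c : ℝ) :
    (c • M).IsHermitian := (symSub d).smul_mem c hM

lemma sym_increment_le (d : ℕ) (δ : ℝ) (F : Matrix (Fin d) (Fin d) ℝ → ℝ) (C : ℝ)
    (hC : ∀ y y' : Matrix (Fin d) (Fin d) ℝ, y.IsHermitian → y'.IsHermitian →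
      |F y - F y'| ≤ C * frobNorm d (y - y'))
    (hD : ∀ (M : Matrix (Fin d) (Fin d) ℝ) (f' : Matrix (Fin d) (Fin d) ℝ →L[ℝ] ℝ),
            M.IsHermitian →
            HasFDerivWithinAt F f' {A | A.IsHermitian} M →
            ∃ a ∈ Sdelta d δ, ∀ w : Matrix (Fin d) (Fin d) ℝ, w.IsHermitian →
              f' w = Matrix.trace (a * w))
    (w : Matrix (Fin d) (Fin d) ℝ) (hw : w.IsHermitian) (c : ℝ)
    (hc : ∀ a ∈ Sdelta d δ, Matrix.trace (a * w) ≤ c)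
    (x : Matrix (Fin d) (Fin d) ℝ) (hx : x.IsHermitian) : F (x + w) - F x ≤ c := by
  let f : symSub d → ℝ := fun y => F y
  have hf : LipschitzWith C.toNNReal f := by
    refine LipschitzWith.of_dist_le_mul fun y z => ?_
    rw [Real.dist_eq, dist_eq_norm]
    refine (hC y z y.2 z.2).trans ?_
    rw [frobNorm_eq_norm]
    have : ‖(y : Matrix (Fin d) (Fin d) ℝ) - z‖ = ‖y - z‖ := rfl
    rw [this]
    exact mul_le_mul_of_nonneg_right (Real.le_coe_toNNReal C) (norm_nonneg _)
  refine lip_increment_le f _ hf ⟨w, hw⟩ c ?_ ⟨x, hx⟩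
  intro y f' hf'
  let p : Matrix (Fin d) (Fin d) ℝ →L[ℝ] symSub d := LinearMap.toContinuousLinearMap (symProj d)
  have hp : ∀ z : symSub d, p (z : Matrix (Fin d) (Fin d) ℝ) = z := symProj_coe d
  have h1 : HasFDerivAt (fun A => f (p A)) (f'.comp p) (y : Matrix (Fin d) (Fin d) ℝ) := by
    refine HasFDerivAt.comp (g := f) (g' := f') _ ?_ p.hasFDerivAt
    rw [hp]; exact hf'
  have h2 : HasFDerivWithinAt F (f'.comp p) {A | A.IsHermitian}
      (y : Matrix (Fin d) (Fin d) ℝ) := by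
    refine h1.hasFDerivWithinAt.congr ?_ ?_
    · intro A hA
      have := hp ⟨A, hA⟩
      simp only [] at this
      simp only [this, f]
    · simp only [hp, f]
  obtain ⟨a, ha, hat⟩ := hD _ _ y.2 h2
  have h3 := hat w hw
  have h4 : p w = ⟨w, hw⟩ := hp ⟨w, hw⟩
  have h5 : f' (p w) = Matrix.trace (a * w) := h3
  rw [h4] at h5
  rw [h5]
  exact hc a ha

lemma trace_mul_eq {d : ℕ} {M : Matrix (Fin d) (Fin d) ℝ} (hM : M.IsHermitian)
    (a : Matrix (Fin d) (Fin d) ℝ) :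
    Matrix.trace (a * M) = ∑ k, hM.eigenvalues k *
      (∑ i, ∑ j, a i j * hM.eigenvectorBasis k j * hM.eigenvectorBasis k i) := by
  have hent : ∀ i j, M j i = ∑ k, hM.eigenvalues k *
      (hM.eigenvectorBasis k j * hM.eigenvectorBasis k i) := by
    intro i j
    conv_lhs => rw [hM.spectral_theorem, Unitary.conjStarAlgAut_apply]
    rw [Matrix.mul_apply]
    refine Finset.sum_congr rfl fun k _ => ?_
    simp [Matrix.mul_diagonal, Matrix.star_apply]
    ring
  simp only [Matrix.trace, Matrix.diag, Matrix.mul_apply]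
  simp_rw [hent, Finset.mul_sum]
  calc ∑ i, ∑ j, ∑ k, a i j * (hM.eigenvalues k *
        (hM.eigenvectorBasis k j * hM.eigenvectorBasis k i))
      = ∑ i, ∑ k, ∑ j, a i j * (hM.eigenvalues k *
        (hM.eigenvectorBasis k j * hM.eigenvectorBasis k i)) :=
        Finset.sum_congr rfl fun i _ => Finset.sum_comm
    _ = ∑ k, ∑ i, ∑ j, a i j * (hM.eigenvalues k *
        (hM.eigenvectorBasis k j * hM.eigenvectorBasis k i)) := Finset.sum_comm
    _ = _ := by
        refine Finset.sum_congr rfl fun k _ => Finset.sum_congr rfl fun i _ =>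
          Finset.sum_congr rfl fun j _ => ?_
        ring

lemma trace_bounds {d : ℕ} {δ : ℝ} {M : Matrix (Fin d) (Fin d) ℝ} (hM : M.IsHermitian)
    {a : Matrix (Fin d) (Fin d) ℝ} (ha : a ∈ Sdelta d δ) :
    δ * (∑ k, max (hM.eigenvalues k) 0) - δ⁻¹ * (∑ k, max (-(hM.eigenvalues k)) 0)
        ≤ Matrix.trace (a * M) ∧
      Matrix.trace (a * M) ≤
        δ⁻¹ * (∑ k, max (hM.eigenvalues k) 0) - δ * (∑ k, max (-(hM.eigenvalues k)) 0) := by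
  have hn : ∀ k, ∑ i, hM.eigenvectorBasis k i ^ 2 = 1 := by
    intro k
    have := hM.eigenvectorBasis.norm_eq_one k
    have h2 := EuclideanSpace.norm_sq_eq (hM.eigenvectorBasis k)
    rw [this] at h2
    simpa using h2.symm
  have hq : ∀ k, δ ≤ (∑ i, ∑ j, a i j * hM.eigenvectorBasis k j * hM.eigenvectorBasis k i) ∧
      (∑ i, ∑ j, a i j * hM.eigenvectorBasis k j * hM.eigenvectorBasis k i) ≤ δ⁻¹ := by
    intro k
    have := ha.2 (fun i => hM.eigenvectorBasis k i)
    simpa only [hn, mul_one] using this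
  rw [trace_mul_eq hM]
  rw [Finset.mul_sum, Finset.mul_sum, Finset.mul_sum, Finset.mul_sum,
    ← Finset.sum_sub_distrib, ← Finset.sum_sub_distrib]
  constructor <;> refine Finset.sum_le_sum fun k _ => ?_ <;> obtain ⟨h1, h2⟩ := hq k <;>
    rcases le_total 0 (hM.eigenvalues k) with h | h
  · rw [max_eq_left h, max_eq_right (by linarith)]; nlinarith
  · rw [max_eq_right h, max_eq_left (by linarith)]; nlinarith
  · rw [max_eq_left h, max_eq_right (by linarith)]; nlinarith
  · rw [max_eq_right h, max_eq_left (by linarith)]; nlinarith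

lemma sum_eigenvalues_smul {d : ℕ} {M : Matrix (Fin d) (Fin d) ℝ} (hM : M.IsHermitian) (c : ℝ)
    (hcM : (c • M).IsHermitian) (g : ℝ → ℝ) :
    ∑ k, g (hcM.eigenvalues k) = ∑ k, g (c * hM.eigenvalues k) := by
  have h1 := hcM.roots_charpoly_eq_eigenvalues
  have h2 : (c • M).charpoly = ∏ k, (Polynomial.X - Polynomial.C (c * hM.eigenvalues k)) := by
    conv_lhs => rw [hM.spectral_theorem, ← map_smul, Unitary.conjStarAlgAut_apply,
      Matrix.charpoly_mul_comm, ← mul_assoc]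
    simp [← Matrix.diagonal_smul, Matrix.charpoly_diagonal]
  have h3 : (c • M).charpoly.roots =
      Multiset.map (fun k => c * hM.eigenvalues k) Finset.univ.val := by
    rw [h2, ← Polynomial.roots_multiset_prod_X_sub_C
      (Multiset.map (fun k => c * hM.eigenvalues k) Finset.univ.val), Multiset.map_map]
    rfl
  rw [h3] at h1
  have h4 := congrArg (fun s => (Multiset.map g s).sum) h1
  simp only [Multiset.map_map] at h4
  exact h4.symm

lemma pucci_smul {d : ℕ} {δ : ℝ} {M : Matrix (Fin d) (Fin d) ℝ} (hM : M.IsHermitian) {c : ℝ}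
    (hc : 0 ≤ c) : pucci d δ (c • M) = c * pucci d δ M := by
  have hcM := hermitian_smul hM c
  rw [pucci, dif_pos hcM, pucci, dif_pos hM,
    sum_eigenvalues_smul hM c hcM (fun r => max r 0),
    sum_eigenvalues_smul hM c hcM (fun r => max (-r) 0)]
  have e1 : ∀ r : ℝ, max (c * r) 0 = c * max r 0 := fun r => by
    rw [mul_max_of_nonneg _ _ hc, mul_zero]
  have e2 : ∀ r : ℝ, max (-(c * r)) 0 = c * max (-r) 0 := fun r => by
    rw [mul_max_of_nonneg _ _ hc, mul_zero, mul_neg]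
  simp only [e1, e2, ← Finset.mul_sum]
  ring

/-- If `φ(s) ≥ φ(0) + s m` for small `s > 0` then `φ'(0) ≥ m`. -/
lemma deriv_ge_of_right {φ : ℝ → ℝ} {T m : ℝ} (h : HasDerivAt φ T 0)
    (hm : ∀ᶠ s in nhdsWithin (0:ℝ) (Set.Ioi 0), φ 0 + s * m ≤ φ s) : m ≤ T := by
  have h1 := h.hasDerivWithinAt (s := Set.Ioi 0)
  rw [hasDerivWithinAt_iff_tendsto_slope' (by simp)] at h1
  refine ge_of_tendsto h1 ?_
  filter_upwards [hm, self_mem_nhdsWithin] with s hs hs0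
  have hs0' : 0 < s := hs0
  rw [slope_def_field, le_div_iff₀ (by linarith)]
  linarith

/-- Inequality (9.30.01) of Lemma 3.2 of Krylov, "An ersatz existence theorem for
fully nonlinear parabolic equations without convexity assumptions": the function
`H_K = max(H, P₀ − K)` is boundedly inhomogeneous with respect to `u''`:
`|H_K(u,t,x) − tr(a u'')| ≤ N(K₀+1)(H̄_K + K + |u'|)` at points of differentiability,
with `N` depending only on `d` and `δ`.  The finite supremum `H̄_K` is expressed
through an arbitrary upper bound `HbarK`. -/
theorem HK_boundedly_inhomogeneous (d : ℕ) (hd : 1 ≤ d) (δ : ℝ) (hδ : δ ∈ Set.Ioo (0:ℝ) 1) :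
    ∃ N : ℝ,
      ∀ (K₀ K : ℝ), 0 ≤ K₀ → 0 < K →
      ∀ (H : (Fin (d + 1) → ℝ) → Matrix (Fin d) (Fin d) ℝ → ℝ → (Fin d → ℝ) → ℝ),
        -- Lipschitz continuity of `H` in `u''`
        (∃ C : ℝ, ∀ (u' : Fin (d + 1) → ℝ) (t : ℝ) (x : Fin d → ℝ)
            (y y' : Matrix (Fin d) (Fin d) ℝ), y.IsHermitian → y'.IsHermitian →
            |H u' y t x - H u' y' t x| ≤ C * frobNorm d (y - y')) →
        -- at points of differentiability in `u''` the derivative lies in `𝕊_δ`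
        (∀ (u' : Fin (d + 1) → ℝ) (t : ℝ) (x : Fin d → ℝ)
            (M : Matrix (Fin d) (Fin d) ℝ) (f' : Matrix (Fin d) (Fin d) ℝ →L[ℝ] ℝ),
            M.IsHermitian →
            HasFDerivWithinAt (fun y => H u' y t x) f' {A | A.IsHermitian} M →
            ∃ a ∈ Sdelta d δ, ∀ w : Matrix (Fin d) (Fin d) ℝ, w.IsHermitian →
              f' w = Matrix.trace (a * w)) →
      ∀ (Hbar : ℝ), 0 ≤ Hbar →
        (∀ (u' : Fin (d + 1) → ℝ) (t : ℝ) (x : Fin d → ℝ),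
            |H u' 0 t x| ≤ K₀ * eunorm u' + Hbar) →
      ∀ (HbarK : ℝ),
        -- `H̄_K = sup (|H_K(u',0,t,x)| − K₀|u'|)` is finite, bounded by `HbarK`
        (∀ (u' : Fin (d + 1) → ℝ) (t : ℝ) (x : Fin d → ℝ),
            |max (H u' 0 t x) (pucci d δ 0 - K)| - K₀ * eunorm u' ≤ HbarK) →
      ∀ (u' : Fin (d + 1) → ℝ) (M : Matrix (Fin d) (Fin d) ℝ), M.IsHermitian →
        ∀ (t : ℝ) (x : Fin d → ℝ) (f' : Matrix (Fin d) (Fin d) ℝ →L[ℝ] ℝ)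
          (a : Matrix (Fin d) (Fin d) ℝ),
          HasFDerivWithinAt (fun y => max (H u' y t x) (pucci d δ y - K)) f'
            {A | A.IsHermitian} M →
          a.IsHermitian →
          (∀ w : Matrix (Fin d) (Fin d) ℝ, w.IsHermitian → f' w = Matrix.trace (a * w)) →
          |max (H u' M t x) (pucci d δ M - K) - Matrix.trace (a * M)| ≤
            N * (K₀ + 1) * (HbarK + K + eunorm u') := by
  obtain ⟨hδ0, hδ1⟩ := hδ
  refine ⟨1 + 4 / δ ^ 2, ?_⟩
  intro K₀ K hK₀ hK H hLip hD Hbar _ _ HbarK hHbarK u' M hM t x f' a hF _ hfa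
  obtain ⟨C, hC⟩ := hLip
  have heu : ∀ v : Fin (d + 1) → ℝ, 0 ≤ eunorm v := fun v => Real.sqrt_nonneg _
  have hHK0 : 0 ≤ HbarK := by
    have h := hHbarK 0 t x
    have h0 : eunorm (0 : Fin (d + 1) → ℝ) = 0 := by simp [eunorm]
    rw [h0, mul_zero, sub_zero] at h
    exact (abs_nonneg _).trans h
  have hR : HbarK + K + K₀ * eunorm u' ≤ (K₀ + 1) * (HbarK + K + eunorm u') := by
    nlinarith [heu u', mul_nonneg hK₀ hHK0, mul_nonneg hK₀ hK.le]
  have hN : 0 ≤ 4 / δ ^ 2 := by positivity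
  have hKe := mul_nonneg hK₀ (heu u')
  set R := (K₀ + 1) * (HbarK + K + eunorm u') with hRdef
  set P := pucci d δ M with hPdef
  set T := Matrix.trace (a * M) with hT
  rw [mul_assoc, ← hRdef]
  -- the restriction of `H_K` to the ray through `M`
  let φ : ℝ → ℝ := fun s => max (H u' ((1 + s) • M) t x) (pucci d δ ((1 + s) • M) - K)
  have hφ : HasDerivAt φ T 0 := by
    have hl : HasDerivAt (fun s : ℝ => (1 + s) • M) M 0 := by
      have h := ((hasDerivAt_id (0:ℝ)).const_add 1).smul_const M
      rw [one_smul] at h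
      exact h
    have hF' : HasFDerivWithinAt (fun y => max (H u' y t x) (pucci d δ y - K)) f'
            {A | A.IsHermitian} ((1 + (0:ℝ)) • M) := by simpa using hF
    have h := hF'.comp_hasDerivWithinAt (s := Set.univ) (0:ℝ) hl.hasDerivWithinAt
      (fun s _ => hermitian_smul hM (1 + s))
    exact (h.hasDerivAt Filter.univ_mem).congr_deriv (hfa M hM)
  have hφ0 : φ 0 = max (H u' M t x) (P - K) := by simp [φ, P]
  have hinc := sym_increment_le d δ (fun y => H u' y t x) C (fun y y' => hC u' t x y y')
    (fun M f' => hD u' t x M f')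
  have hnear : ∀ᶠ s in nhds (0:ℝ), -1 < s := lt_mem_nhds (by norm_num)
  have hpos : ∀ᶠ s in nhdsWithin (0:ℝ) (Set.Ioi 0), 0 < s := self_mem_nhdsWithin
  have hpu : ∀ s : ℝ, -1 < s → pucci d δ ((1 + s) • M) = (1 + s) * P := fun s hs =>
    pucci_smul hM (by linarith)
  rcases le_or_gt (H u' M t x) (P - K) with hcase | hcase
  · -- the Pucci part is active
    rw [max_eq_right hcase] at hφ0 ⊢
    have hge : ∀ᶠ s in nhds (0:ℝ), (1 + s) * P - K ≤ φ s := by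
      filter_upwards [hnear] with s hs
      rw [← hpu s hs]; exact le_max_right _ _
    have hTP : T = P := by
      have hψ : HasDerivAt (fun s => φ s - ((1 + s) * P - K)) (T - P) 0 := by
        have h1 : HasDerivAt (fun s : ℝ => (1 + s) * P - K) P 0 := by
          simpa using (((hasDerivAt_id (0:ℝ)).const_add 1).mul_const P).sub_const K
        exact hφ.sub h1
      have hmin : IsLocalMin (fun s => φ s - ((1 + s) * P - K)) 0 := by
        filter_upwards [hge] with s hs
        rw [hφ0]; linarith
      have := hmin.hasDerivAt_eq_zero hψ
      linarith
    rw [hTP, show P - K - P = -K by ring, abs_neg, abs_of_pos hK]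
    have : 0 ≤ 4 / δ ^ 2 * R := mul_nonneg hN (by linarith)
    nlinarith
  · -- the `H` part is active
    rw [max_eq_left hcase.le] at hφ0 ⊢
    set A := ∑ k, max (hM.eigenvalues k) 0 with hA
    set B := ∑ k, max (-(hM.eigenvalues k)) 0 with hB
    have hA0 : 0 ≤ A := Finset.sum_nonneg fun k _ => le_max_right _ _
    have hB0 : 0 ≤ B := Finset.sum_nonneg fun k _ => le_max_right _ _
    have hPAB : P = 2 * δ⁻¹ * A - (δ / 2) * B := by rw [hPdef, pucci, dif_pos hM]
    have htb : ∀ b ∈ Sdelta d δ, δ * A - δ⁻¹ * B ≤ Matrix.trace (b * M) ∧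
        Matrix.trace (b * M) ≤ δ⁻¹ * A - δ * B := fun b hb => trace_bounds hM hb
    have h0M : H u' M t x - H u' 0 t x ≤ δ⁻¹ * A - δ * B := by
      have := hinc M hM _ (fun b hb => (htb b hb).2) 0 Matrix.isHermitian_zero
      simpa using this
    have hup : ∀ s : ℝ, 0 < s →
        H u' ((1 + s) • M) t x ≤ H u' M t x + s * (δ⁻¹ * A - δ * B) := by
      intro s hs
      have := hinc (s • M) (hermitian_smul hM s) (s * (δ⁻¹ * A - δ * B)) (fun b hb => by
        rw [Matrix.mul_smul, Matrix.trace_smul, smul_eq_mul]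
        exact mul_le_mul_of_nonneg_left (htb b hb).2 hs.le) M hM
      rw [add_smul, one_smul]
      linarith
    have hlo : ∀ s : ℝ, 0 < s →
        H u' M t x + s * (δ * A - δ⁻¹ * B) ≤ H u' ((1 + s) • M) t x := by
      intro s hs
      have := hinc ((-s) • M) (hermitian_smul hM (-s)) (-(s * (δ * A - δ⁻¹ * B)))
        (fun b hb => by
          rw [Matrix.mul_smul, Matrix.trace_smul, smul_eq_mul, neg_mul]
          exact neg_le_neg (mul_le_mul_of_nonneg_left (htb b hb).1 hs.le))
        ((1 + s) • M) (hermitian_smul hM _)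
      rw [← add_smul, add_neg_cancel_right, one_smul] at this
      linarith
    have hTlo : δ * A - δ⁻¹ * B ≤ T := by
      refine deriv_ge_of_right hφ ?_
      filter_upwards [hpos] with s hs
      rw [hφ0]
      exact (hlo s hs).trans (le_max_left _ _)
    have hThi : T ≤ δ⁻¹ * A - δ * B := by
      have : -(δ⁻¹ * A - δ * B) ≤ -T := by
        refine deriv_ge_of_right hφ.neg ?_
        have hsmall : ∀ᶠ s in nhds (0:ℝ),
            (1 + s) * P - K < H u' M t x + s * (δ⁻¹ * A - δ * B) := by
          refine ContinuousAt.eventually_lt (by fun_prop) (by fun_prop) ?_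
          simpa using hcase
        filter_upwards [hpos, nhdsWithin_le_nhds hsmall] with s hs hs2
        have : φ s ≤ H u' M t x + s * (δ⁻¹ * A - δ * B) := by
          refine max_le (hup s hs) ?_
          rw [hpu s (by linarith)]; exact hs2.le
        simp only [Pi.neg_apply, hφ0]
        linarith
      linarith
    have hH0 : H u' 0 t x + K ≤ R := by
      have h1 := hHbarK u' t x
      have h2 := le_abs_self (max (H u' 0 t x) (pucci d δ 0 - K))
      have h3 := le_max_left (H u' 0 t x) (pucci d δ 0 - K)
      linarith
    have hi1 : 1 ≤ δ⁻¹ := (one_le_inv₀ hδ0).2 hδ1.le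
    have hiδ : δ⁻¹ * δ = 1 := inv_mul_cancel₀ hδ0.ne'
    have hR0 : 0 ≤ R := by linarith
    have hN2 : 4 / δ ^ 2 = 4 * (δ⁻¹ * δ⁻¹) := by rw [div_eq_mul_inv, sq, mul_inv]
    rw [hN2]
    set e := δ⁻¹ with he
    have hAB : e * A + δ / 2 * B ≤ R := by linarith
    have heA : 0 ≤ e * A := by positivity
    have hdA : 0 ≤ δ * A := by positivity
    have hdB : 0 ≤ δ * B := by positivity
    have heR : R ≤ e * e * R := le_mul_of_one_le_left hR0 (by nlinarith)
    have heB : e * B ≤ 2 * (e * e * R) := by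
      have h1 : δ / 2 * B ≤ R := by linarith
      have h2 := mul_le_mul_of_nonneg_left h1 (by positivity : 0 ≤ 2 * (e * e))
      have h3 : 2 * (e * e) * (δ / 2 * B) = (e * δ) * (e * B) := by ring
      rw [h3, hiδ] at h2
      linarith
    rw [abs_le]
    constructor
    · linarith
    · linarith
end
end

section
/- Let d ≥ 1 be an integer and δ ∈ (0,1). Let f : Sym_d(ℝ) → ℝ be a Lipschitz continuous function on the space of symmetric d×d real matrices such that at every point M where f is Fréchet differentiable there exists a ∈ 𝕊_δ with Df(M)(w) = tr(a w) for all symmetric w. Then for every symmetric d×d matrix M there exists a ∈ 𝕊_δ such that f(M) = f(0) + tr(a M). -/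
open scoped BigOperators NNReal

attribute [local instance] Matrix.frobeniusNormedAddCommGroup Matrix.frobeniusNormedSpace

noncomputable section

open MeasureTheory in
lemma key_mem {E : Type*} [NormedAddCommGroup E] [NormedSpace ℝ E] [FiniteDimensional ℝ E]
    {C : ℝ≥0} {g : E → ℝ} (hg : LipschitzWith C g) (v : E) (V : Set ℝ)
    (hVc : IsClosed V) (hV : Convex ℝ V)
    (H : ∀ x, DifferentiableAt ℝ g x → fderiv ℝ g x v ∈ V) : g v - g 0 ∈ V := by
  borelize E
  let μ : Measure E := (Module.finBasis ℝ E).addHaar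
  have h1 : ∀ᵐ x ∂μ, DifferentiableAt ℝ g x := hg.ae_differentiableAt
  have hD : MeasurableSet {x | DifferentiableAt ℝ g x} := measurableSet_of_differentiableAt ℝ g
  have h2 : ∀ t : ℝ, ∀ᵐ x ∂μ, DifferentiableAt ℝ g (x + t • v) := fun t =>
    (quasiMeasurePreserving_add_right μ (t • v)).ae h1
  have h3 : ∀ᵐ x ∂μ, ∀ᵐ t : ℝ, DifferentiableAt ℝ g (x + t • v) := by
    have hm : MeasurableSet {p : E × ℝ | DifferentiableAt ℝ g (p.1 + p.2 • v)} :=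
      hD.preimage (f := fun p : E × ℝ => p.1 + p.2 • v) (by fun_prop)
    exact (Measure.ae_ae_comm hm).2 (Filter.Eventually.of_forall h2)
  have h4 : ∀ x, (∀ᵐ t : ℝ, DifferentiableAt ℝ g (x + t • v)) → g (x + v) - g x ∈ V := by
    intro x hx
    have hl : LipschitzWith (C * ‖v‖₊) (fun t : ℝ => g (x + t • v)) := by
      refine hg.comp (LipschitzWith.of_dist_le_mul fun s t => ?_)
      simp [dist_eq_norm, ← sub_smul, norm_smul, mul_comm]
    have hac : AbsolutelyContinuousOnInterval (fun t : ℝ => g (x + t • v)) 0 1 :=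
      hl.lipschitzOnWith.absolutelyContinuousOnInterval
    have hint := hac.integral_deriv_eq_sub
    simp only [one_smul, zero_smul, add_zero] at hint
    rw [← hint, intervalIntegral.integral_of_le zero_le_one]
    have : IsProbabilityMeasure (volume.restrict (Set.Ioc (0:ℝ) 1)) := ⟨by simp⟩
    refine hV.integral_mem hVc ?_ ?_
    · refine ae_restrict_of_ae ?_
      filter_upwards [hx] with t ht
      have hd : HasDerivAt (fun t : ℝ => g (x + t • v)) (fderiv ℝ g (x + t • v) v) t := by
        refine ht.hasFDerivAt.comp_hasDerivAt t ?_
        simpa using ((hasDerivAt_id t).smul_const v).const_add x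
      rw [hd.deriv]
      exact H _ ht
    · exact (intervalIntegrable_iff_integrableOn_Ioc_of_le zero_le_one).1
        hac.intervalIntegrable_deriv
  have hdense : Dense {x | g (x + v) - g x ∈ V} :=
    Measure.dense_of_ae (μ := μ) (h3.mono h4)
  have hcl : IsClosed {x | g (x + v) - g x ∈ V} := by
    have := hg.continuous
    exact hVc.preimage (f := fun x => g (x + v) - g x) (by fun_prop)
  have : (0:E) ∈ {x | g (x + v) - g x ∈ V} := by
    rw [← hcl.closure_eq]; exact hdense 0
  simpa using this

lemma Sdelta_quad {d : ℕ} (a : Matrix (Fin d) (Fin d) ℝ) (ξ : Fin d → ℝ) :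
    (∑ i, ∑ j, a i j * ξ j * ξ i) = ξ ⬝ᵥ (a.mulVec ξ) := by
  simp only [dotProduct, Matrix.mulVec, Finset.mul_sum]
  refine Finset.sum_congr rfl fun i _ => Finset.sum_congr rfl fun j _ => by ring

lemma Sdelta_bound {d : ℕ} {δ : ℝ} (hδ : 0 < δ) {a : Matrix (Fin d) (Fin d) ℝ}
    (ha : a ∈ Sdelta d δ) (i j : Fin d) : a i j ∈ Set.Icc (-δ⁻¹) δ⁻¹ := by
  obtain ⟨hs, hq⟩ := ha
  have hnn : ∀ ξ : Fin d → ℝ, 0 ≤ ξ ⬝ᵥ (a.mulVec ξ) := fun ξ => by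
    rw [← Sdelta_quad]
    exact le_trans (by positivity) (hq ξ).1
  have hdiag : ∀ k, a k k ≤ δ⁻¹ := fun k => by
    have h := (hq (Pi.single k 1)).2
    rw [Sdelta_quad] at h
    have h2 : ∑ x, (Pi.single k (1:ℝ) : Fin d → ℝ) x ^ 2 = 1 := by
      simp [Pi.single_apply]
    rw [h2] at h
    simpa using h
  have hsym : a j i = a i j := by simpa using hs.apply i j
  have h1 := hnn (Pi.single i 1 + Pi.single j 1)
  have h2 := hnn (Pi.single i 1 - Pi.single j 1)
  simp [Matrix.mulVec_add, Matrix.mulVec_sub, hsym] at h1 h2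
  have := hdiag i
  have := hdiag j
  constructor <;> linarith

lemma Sdelta_image {d : ℕ} {δ : ℝ} (hδ : 0 < δ) (M : Matrix (Fin d) (Fin d) ℝ) :
    IsClosed {r : ℝ | ∃ a ∈ Sdelta d δ, Matrix.trace (a * M) = r} ∧
    Convex ℝ {r : ℝ | ∃ a ∈ Sdelta d δ, Matrix.trace (a * M) = r} := by
  constructor
  · let S : Set (Fin d → Fin d → ℝ) := {a | Matrix.of a ∈ Sdelta d δ}
    have hSc : IsClosed S := by
      have : S = {a | ∀ i j, a j i = a i j} ∩ ⋂ ξ : Fin d → ℝ,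
          ({a | δ * (∑ i, ξ i ^ 2) ≤ (∑ i, ∑ j, a i j * ξ j * ξ i)} ∩
          {a | (∑ i, ∑ j, a i j * ξ j * ξ i) ≤ δ⁻¹ * (∑ i, ξ i ^ 2)}) := by
        ext a
        have e : (Matrix.of a).IsHermitian ↔ ∀ i j, a j i = a i j := by
          rw [Matrix.IsHermitian.ext_iff]; rfl
        simp only [S, Sdelta, Set.mem_ofPred_eq, Set.mem_inter_iff, Set.mem_iInter, e]
        rfl
      rw [this]
      refine IsClosed.inter ?_ (isClosed_iInter fun ξ => IsClosed.inter ?_ ?_)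
      · simp only [Set.ofPred_forall]
        exact isClosed_iInter fun i => isClosed_iInter fun j =>
          isClosed_eq (by fun_prop) (by fun_prop)
      · exact isClosed_le (by fun_prop) (by fun_prop)
      · exact isClosed_le (by fun_prop) (by fun_prop)
    have hS : IsCompact S := by
      refine IsCompact.of_isClosed_subset (isCompact_univ_pi fun _ : Fin d =>
        isCompact_univ_pi fun _ : Fin d => isCompact_Icc (a := -δ⁻¹) (b := δ⁻¹)) hSc ?_
      intro a ha i _ j _
      exact Sdelta_bound hδ ha i j
    have hcont : Continuous (fun a : Fin d → Fin d → ℝ => ∑ i, ∑ j, a i j * M j i) := by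
      fun_prop
    have := (hS.image hcont).isClosed
    have he : {r : ℝ | ∃ a ∈ Sdelta d δ, Matrix.trace (a * M) = r} =
        (fun a : Fin d → Fin d → ℝ => ∑ i, ∑ j, a i j * M j i) '' S := rfl
    rw [he]
    exact this
  · rintro _ ⟨a, ha, rfl⟩ _ ⟨b, hb, rfl⟩ s t hs ht hst
    refine ⟨s • a + t • b, ⟨?_, fun ξ => ?_⟩, by simp [add_mul]⟩
    · refine Matrix.IsHermitian.ext fun i j => ?_
      have h1 := ha.1.apply i j
      have h2 := hb.1.apply i j
      simp at h1 h2
      simp [h1, h2]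
    · have h1 := ha.2 ξ
      have h2 := hb.2 ξ
      rw [Sdelta_quad] at h1 h2 ⊢
      rw [Matrix.add_mulVec, Matrix.smul_mulVec, Matrix.smul_mulVec, dotProduct_add,
        dotProduct_smul, dotProduct_smul, smul_eq_mul, smul_eq_mul]
      obtain rfl : t = 1 - s := by linarith
      constructor <;> nlinarith

lemma exists_lipschitz {E : Type*} [NormedAddCommGroup E] [NormedSpace ℝ E]
    [FiniteDimensional ℝ E] (T : E →ₗ[ℝ] E) : ∃ K, LipschitzWith K T :=
  ⟨_, (LinearMap.toContinuousLinearMap T).lipschitz⟩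

lemma hasFDerivAt_shift {E : Type*} [NormedAddCommGroup E] [NormedSpace ℝ E] {g : E → ℝ}
    {L : E →L[ℝ] ℝ} {x y : E} (h : HasFDerivAt g L x) (hg : ∀ z, g (z + (x - y)) = g z) :
    HasFDerivAt g L y := by
  have h4 : HasFDerivAt g L (y + (x - y)) := by rwa [add_sub_cancel]
  have h5 := h4.comp y ((hasFDerivAt_id y).add_const (x - y))
  rw [ContinuousLinearMap.comp_id] at h5
  have he : (g ∘ fun z => id z + (x - y)) = g := funext hg
  rwa [he] at h5

/-- Symmetrization. -/
def symL (d : ℕ) : Matrix (Fin d) (Fin d) ℝ →ₗ[ℝ] Matrix (Fin d) (Fin d) ℝ where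
  toFun := fun A => (2⁻¹ : ℝ) • (A + A.transpose)
  map_add' := fun A B => by
    rw [Matrix.transpose_add, ← smul_add]; congr 1; abel
  map_smul' := fun c A => by
    rw [Matrix.transpose_smul, ← smul_add, smul_comm]; rfl

lemma symL_apply {d : ℕ} (A : Matrix (Fin d) (Fin d) ℝ) :
    symL d A = (2⁻¹ : ℝ) • (A + A.transpose) := rfl

lemma symL_herm {d : ℕ} (A : Matrix (Fin d) (Fin d) ℝ) : (symL d A).IsHermitian := by
  refine Matrix.IsHermitian.ext fun i j => ?_
  simp [symL_apply, add_comm]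

lemma symL_of_herm {d : ℕ} {A : Matrix (Fin d) (Fin d) ℝ} (h : A.IsHermitian) :
    symL d A = A := by
  ext i j
  have := h.apply i j
  simp at this
  simp [symL_apply, this]
  ring

/-- The Hadamard-formula representation established in the proof of Lemma 3.2 of
Krylov, "An ersatz existence theorem for fully nonlinear parabolic equations
without convexity assumptions": a Lipschitz function on symmetric matrices whose
derivative (at each point of differentiability along the symmetric matrices)
lies in `𝕊_δ` satisfies `f(M) = f(0) + tr(a M)` for some `a ∈ 𝕊_δ`. -/
theorem hadamard_representation (d : ℕ) (hd : 1 ≤ d) (δ : ℝ) (hδ : δ ∈ Set.Ioo (0:ℝ) 1)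
    (f : Matrix (Fin d) (Fin d) ℝ → ℝ)
    (hlip : ∃ C : ℝ≥0, LipschitzOnWith C f {A : Matrix (Fin d) (Fin d) ℝ | A.IsHermitian})
    (hderiv : ∀ (M : Matrix (Fin d) (Fin d) ℝ) (f' : Matrix (Fin d) (Fin d) ℝ →L[ℝ] ℝ),
      M.IsHermitian →
      HasFDerivWithinAt f f' {A : Matrix (Fin d) (Fin d) ℝ | A.IsHermitian} M →
      ∃ a ∈ Sdelta d δ, ∀ w : Matrix (Fin d) (Fin d) ℝ, w.IsHermitian →
        f' w = Matrix.trace (a * w)) :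
    ∀ M : Matrix (Fin d) (Fin d) ℝ, M.IsHermitian →
      ∃ a ∈ Sdelta d δ, f M = f 0 + Matrix.trace (a * M) := by
  intro M hM
  obtain ⟨C, hC⟩ := hlip
  obtain ⟨K, hK⟩ := exists_lipschitz (symL d)
  have hg : LipschitzWith (C * K) (fun A => f (symL d A)) := by
    have h := hC.comp (hK.lipschitzOnWith (s := Set.univ)) (fun A _ => symL_herm A)
    exact lipschitzOnWith_univ.1 h
  obtain ⟨hVc, hV⟩ := Sdelta_image hδ.1 M
  have key := key_mem hg M _ hVc hV ?_
  · obtain ⟨a, ha, h⟩ := key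
    refine ⟨a, ha, ?_⟩
    rw [symL_of_herm hM, map_zero] at h
    linarith
  · intro x hx
    have h1 := hx.hasFDerivAt
    set L := fderiv ℝ (fun A => f (symL d A)) x with hL
    have hidem : symL d (symL d x) = symL d x := symL_of_herm (symL_herm x)
    have h2 : HasFDerivAt (fun A => f (symL d A)) L (symL d x) :=
      hasFDerivAt_shift h1 fun A => by simp [map_add, map_sub, hidem]
    have h6 : HasFDerivWithinAt f L {A : Matrix (Fin d) (Fin d) ℝ | A.IsHermitian} (symL d x) :=
      h2.hasFDerivWithinAt.congr
        (fun A hA => congrArg f (symL_of_herm hA).symm) (congrArg f hidem.symm)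
    obtain ⟨a, ha, h⟩ := hderiv _ L (symL_herm x) h6
    exact ⟨a, ha, (h M hM).symm⟩
end
end
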